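/- Let c ∈ ℝ^{m×n}. For each t, let β_t > 0, a_t ∈ (ℝ_+^*)^m, b_t ∈ (ℝ_+^*)^n, set π_t = diag(a_t) e^{−β_t c} diag(b_t) with marginals p_t = π_t𝟙 and q_t = π_tᵀ𝟙 of total mass 1. Assume β_t → ∞, p_t → p ∈ Δ*_m and q_t → q ∈ Δ*_n. Then EOT_{β_t}(p_t, q_t) → OT(p,q), and, up to extracting a subsequence, (π_t) converges to an optimal transport plan for OT(p,q). -/

import Mathlib

/-!
A plan `diag(a) e^{-βc} diag(b)` is the minimiser of the entropic problem for its own marginals: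
for any competitor `x`, the excess of the objective is exactly `β⁻¹ KL(x|π)`, since `log π + β c` is
a sum of a function of the row and a function of the column. As `β → ∞` the entropic value
approaches the unregularised one uniformly over bounded marginals, because `KL(·|π^ref)` is
nonnegative and bounded on bounded sets. The unregularised value is Lipschitz in the marginals:
the rounding procedure of Altschuler et al. moves a plan onto new marginals at an `ℓ¹` cost
controlled by the change of marginals. Hence any limit of the plans has transport cost `OT(p, q)`,
and such limits exist by compactness.
-/

open Finset Filter Topology ENNReal

noncomputable section

/-- Frobenius inner product `⟨c, π⟩ = ∑_{ij} c_ij π_ij`. -/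
def frob {m n : ℕ} (c π : Matrix (Fin m) (Fin n) ℝ) : ℝ := ∑ i, ∑ j, c i j * π i j

/-- Row sums `π𝟙`. -/
def rowSum {m n : ℕ} (π : Matrix (Fin m) (Fin n) ℝ) : Fin m → ℝ := fun i => ∑ j, π i j

/-- Column sums `πᵀ𝟙`. -/
def colSum {m n : ℕ} (π : Matrix (Fin m) (Fin n) ℝ) : Fin n → ℝ := fun j => ∑ i, π i j

/-- Kullback–Leibler divergence between nonnegative vectors. -/
def KLvec {k : ℕ} (a b : Fin k → ℝ) : ℝ := ∑ i, (a i * Real.log (a i / b i) - a i + b i)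

/-- Kullback–Leibler divergence between nonnegative matrices. -/
def KLmat {m n : ℕ} (a b : Matrix (Fin m) (Fin n) ℝ) : ℝ :=
  ∑ i, ∑ j, (a i j * Real.log (a i j / b i j) - a i j + b i j)

/-- The tipless simplex `Δ*_k`: strictly positive entries summing to 1. -/
def simplexPos (k : ℕ) : Set (Fin k → ℝ) := {p | (∀ i, 0 < p i) ∧ ∑ i, p i = 1}

/-- The simplex `Δ_k`: nonnegative entries summing to 1. -/
def simplexNN (k : ℕ) : Set (Fin k → ℝ) := {p | (∀ i, 0 ≤ p i) ∧ ∑ i, p i = 1}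

/-- Transport plans `Γ(p, q)`. -/
def Gamma {m n : ℕ} (p : Fin m → ℝ) (q : Fin n → ℝ) : Set (Matrix (Fin m) (Fin n) ℝ) :=
  {π | (∀ i j, 0 ≤ π i j) ∧ rowSum π = p ∧ colSum π = q}

/-- Half-relaxed plans `Γ(*, q)`. -/
def GammaStar {m n : ℕ} (q : Fin n → ℝ) : Set (Matrix (Fin m) (Fin n) ℝ) :=
  {π | (∀ i j, 0 ≤ π i j) ∧ colSum π = q}

/-- Reference plan `π^ref = (mn)⁻¹ 𝟙𝟙ᵀ`. -/
def piRef (m n : ℕ) : Matrix (Fin m) (Fin n) ℝ := fun _ _ => 1 / (m * n)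

/-- Optimal transport value `OT(p,q)`. -/
def OTval {m n : ℕ} (c : Matrix (Fin m) (Fin n) ℝ) (p : Fin m → ℝ) (q : Fin n → ℝ) : ℝ :=
  ⨅ π : Gamma p q, frob c π.1

/-- Entropic OT objective `⟨c,π⟩ + β⁻¹ KL(π|π^ref)`. -/
def eotObj {m n : ℕ} (c : Matrix (Fin m) (Fin n) ℝ) (β : ℝ) (π : Matrix (Fin m) (Fin n) ℝ) : ℝ :=
  frob c π + β⁻¹ * KLmat π (piRef m n)

/-- Entropic OT value `EOT_β(p,q)`. -/
def eotVal {m n : ℕ} (c : Matrix (Fin m) (Fin n) ℝ) (β : ℝ) (p : Fin m → ℝ) (q : Fin n → ℝ) : ℝ :=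
  ⨅ π : Gamma p q, eotObj c β π.1

/-- Gibbs kernel `K = e^{-βc}` (entrywise). -/
def gibbs {m n : ℕ} (c : Matrix (Fin m) (Fin n) ℝ) (β : ℝ) : Matrix (Fin m) (Fin n) ℝ :=
  fun i j => Real.exp (-(β * c i j))

/-- Annealed Sinkhorn scaling vectors `(a_t, b_t)`:
`b_0 = 𝟙`, `a_{t+1} = p ⊘ (K_t b_t)`, `b_{t+1} = q ⊘ (K_{t+1}ᵀ a_{t+1})`, `K_t = e^{-β_t c}`. -/
def sinkAB {m n : ℕ} (p : Fin m → ℝ) (q : Fin n → ℝ) (c : Matrix (Fin m) (Fin n) ℝ)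
    (β : ℕ → ℝ) : ℕ → (Fin m → ℝ) × (Fin n → ℝ)
  | 0 => (fun _ => 1, fun _ => 1)
  | t + 1 =>
    let prev := sinkAB p q c β t
    let a : Fin m → ℝ := fun i => p i / ∑ j, gibbs c (β t) i j * prev.2 j
    (a, fun j => q j / ∑ i, gibbs c (β (t + 1)) i j * a i)

/-- Annealed Sinkhorn primal iterate `π_t = diag(a_t) K_t diag(b_t)`. -/
def sinkPlan {m n : ℕ} (p : Fin m → ℝ) (q : Fin n → ℝ) (c : Matrix (Fin m) (Fin n) ℝ)
    (β : ℕ → ℝ) (t : ℕ) : Matrix (Fin m) (Fin n) ℝ :=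
  fun i j => (sinkAB p q c β t).1 i * gibbs c (β t) i j * (sinkAB p q c β t).2 j

/-- `ℓ¹` norm of a vector. -/
def l1vec {k : ℕ} (a : Fin k → ℝ) : ℝ := ∑ i, |a i|

/-- Oscillation semi-norm `‖c‖_osc = max c - min c`. -/
def cOsc {m n : ℕ} (c : Matrix (Fin m) (Fin n) ℝ) : ℝ :=
  (⨆ i, ⨆ j, c i j) - ⨅ i, ⨅ j, c i j

/-- `‖log p‖_∞`. -/
def logSup {k : ℕ} (p : Fin k → ℝ) : ℝ := ⨆ i, |Real.log (p i)|

/-- The rounding ("projection") procedure of Altschuler et al. (Algorithm 3). -/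
def roundPlan {m n : ℕ} (p : Fin m → ℝ) (q : Fin n → ℝ) (π : Matrix (Fin m) (Fin n) ℝ) :
    Matrix (Fin m) (Fin n) ℝ :=
  let π' : Matrix (Fin m) (Fin n) ℝ := fun i j => min 1 (p i / rowSum π i) * π i j
  let π'' : Matrix (Fin m) (Fin n) ℝ := fun i j => π' i j * min 1 (q j / colSum π' j)
  fun i j => π'' i j +
    (p i - rowSum π'' i) * (q j - colSum π'' j) / l1vec (fun i' => p i' - rowSum π'' i')

/-- Relaxed entropic objective `F^reg(π) = ⟨c,π⟩ + α⁻¹ KL(π𝟙|p) + β⁻¹ KL(π|π^ref)`. -/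
def Freg {m n : ℕ} (c : Matrix (Fin m) (Fin n) ℝ) (p : Fin m → ℝ) (α β : ℝ)
    (π : Matrix (Fin m) (Fin n) ℝ) : ℝ :=
  frob c π + α⁻¹ * KLvec (rowSum π) p + β⁻¹ * KLmat π (piRef m n)

/-- Dual functional for the relaxed entropic problem. -/
def dualFun {m n : ℕ} (p : Fin m → ℝ) (q : Fin n → ℝ) (c : Matrix (Fin m) (Fin n) ℝ)
    (α β : ℝ) (u : Fin m → ℝ) (v : Fin n → ℝ) : ℝ :=
  α⁻¹ * (∑ i, (1 - Real.exp (-(α * u i))) * p i) + ∑ j, v j * q j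
    - β⁻¹ * (∑ i, ∑ j, Real.exp (β * (u i + v j - c i j)) * piRef m n i j) + β⁻¹

/-- Dual functional of entropic OT. -/
def eotDual {m n : ℕ} (p : Fin m → ℝ) (q : Fin n → ℝ) (c : Matrix (Fin m) (Fin n) ℝ)
    (β : ℝ) (u : Fin m → ℝ) (v : Fin n → ℝ) : ℝ :=
  ∑ i, p i * u i + ∑ j, q j * v j
    + β⁻¹ * (1 - ∑ i, ∑ j, piRef m n i j * Real.exp (β * (u i + v j - c i j)))

/-- The set `C_β` of plans of the form `diag(a) e^{-βc} diag(b)` with `a, b ≥ 0`. -/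
def scalingSet {m n : ℕ} (c : Matrix (Fin m) (Fin n) ℝ) (β : ℝ) :
    Set (Matrix (Fin m) (Fin n) ℝ) :=
  {π | ∃ a : Fin m → ℝ, ∃ b : Fin n → ℝ, (∀ i, 0 ≤ a i) ∧ (∀ j, 0 ≤ b j) ∧
    π = fun i j => a i * Real.exp (-(β * c i j)) * b j}

section Plans

variable {m n : ℕ} {p : Fin m → ℝ} {q : Fin n → ℝ} {c π : Matrix (Fin m) (Fin n) ℝ}

lemma sum_rowSum_eq_sum_colSum (π : Matrix (Fin m) (Fin n) ℝ) :
    ∑ i, rowSum π i = ∑ j, colSum π j :=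
  Finset.sum_comm

lemma le_rowSum (hπ : ∀ i j, 0 ≤ π i j) (i : Fin m) (j : Fin n) : π i j ≤ rowSum π i :=
  single_le_sum (f := fun j => π i j) (fun j _ => hπ i j) (mem_univ j)

lemma le_colSum (hπ : ∀ i j, 0 ≤ π i j) (i : Fin m) (j : Fin n) : π i j ≤ colSum π j :=
  single_le_sum (f := fun i => π i j) (fun i _ => hπ i j) (mem_univ i)

lemma row_nonneg_of_mem_Gamma (hπ : π ∈ Gamma p q) (i : Fin m) : 0 ≤ p i :=
  hπ.2.1 ▸ sum_nonneg fun j _ => hπ.1 i j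

lemma col_nonneg_of_mem_Gamma (hπ : π ∈ Gamma p q) (j : Fin n) : 0 ≤ q j :=
  hπ.2.2 ▸ sum_nonneg fun i _ => hπ.1 i j

lemma sum_eq_sum_of_mem_Gamma (hπ : π ∈ Gamma p q) : ∑ i, p i = ∑ j, q j := by
  rw [← hπ.2.1, ← hπ.2.2, sum_rowSum_eq_sum_colSum]

lemma continuous_rowSum : Continuous (rowSum : Matrix (Fin m) (Fin n) ℝ → Fin m → ℝ) := by
  unfold rowSum
  fun_prop

lemma continuous_colSum : Continuous (colSum : Matrix (Fin m) (Fin n) ℝ → Fin n → ℝ) := by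
  unfold colSum
  fun_prop

lemma continuous_frob (c : Matrix (Fin m) (Fin n) ℝ) : Continuous (frob c) := by
  unfold frob
  fun_prop

lemma continuous_l1vec {k : ℕ} : Continuous (l1vec : (Fin k → ℝ) → ℝ) := by
  unfold l1vec
  fun_prop

lemma l1vec_sub_comm {k : ℕ} (u v : Fin k → ℝ) : l1vec (u - v) = l1vec (v - u) := by
  simp only [l1vec, Pi.sub_apply, abs_sub_comm]

lemma mem_Gamma_of_tendsto {ι : Type*} {l : Filter ι} [l.NeBot]
    {P : ι → Matrix (Fin m) (Fin n) ℝ} (hP : Tendsto P l (𝓝 π)) (hnonneg : ∀ t i j, 0 ≤ P t i j)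
    (hrow : Tendsto (fun t => rowSum (P t)) l (𝓝 p))
    (hcol : Tendsto (fun t => colSum (P t)) l (𝓝 q)) : π ∈ Gamma p q := by
  refine ⟨fun i j => ?_, ?_, ?_⟩
  · exact ge_of_tendsto' ((hP.apply_nhds i).apply_nhds j) fun t => hnonneg t i j
  · exact tendsto_nhds_unique ((continuous_rowSum.tendsto π).comp hP) hrow
  · exact tendsto_nhds_unique ((continuous_colSum.tendsto π).comp hP) hcol

lemma isCompact_setOf_entries_mem_Icc (B : Fin m → ℝ) :
    IsCompact {π : Matrix (Fin m) (Fin n) ℝ | ∀ i j, π i j ∈ Set.Icc 0 (B i)} :=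
  isCompact_pi_infinite fun _ => isCompact_pi_infinite fun _ => isCompact_Icc

lemma mem_Icc_of_mem_Gamma {B : Fin m → ℝ} (hπ : π ∈ Gamma p q) (hB : p ≤ B) (i : Fin m)
    (j : Fin n) : π i j ∈ Set.Icc 0 (B i) :=
  ⟨hπ.1 i j, ((le_rowSum hπ.1 i j).trans_eq (congrFun hπ.2.1 i)).trans (hB i)⟩

lemma exists_subseq_tendsto_mem_Gamma {π : ℕ → Matrix (Fin m) (Fin n) ℝ}
    (hπ : ∀ t i j, 0 ≤ π t i j)
    (hpt : Tendsto (fun t => rowSum (π t)) atTop (𝓝 p))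
    (hqt : Tendsto (fun t => colSum (π t)) atTop (𝓝 q)) :
    ∃ φ : ℕ → ℕ, StrictMono φ ∧ ∃ πinf ∈ Gamma p q,
      Tendsto (fun k => π (φ k)) atTop (𝓝 πinf) := by
  have : FirstCountableTopology (Matrix (Fin m) (Fin n) ℝ) :=
    inferInstanceAs (FirstCountableTopology (Fin m → Fin n → ℝ))
  obtain ⟨B, hB⟩ := hpt.isBoundedUnder_le
  have hbox : ∀ᶠ t in atTop, ∀ i j, π t i j ∈ Set.Icc 0 (B i) := by
    filter_upwards [eventually_map.1 hB] with t ht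
    exact mem_Icc_of_mem_Gamma ⟨hπ t, rfl, rfl⟩ ht
  obtain ⟨πinf, -, φ, hφ, hlim⟩ :=
    (isCompact_setOf_entries_mem_Icc B).tendsto_subseq' hbox.frequently
  exact ⟨φ, hφ, πinf, mem_Gamma_of_tendsto hlim (fun k => hπ (φ k))
    (hpt.comp hφ.tendsto_atTop) (hqt.comp hφ.tendsto_atTop), hlim⟩

lemma frob_sub (c x y : Matrix (Fin m) (Fin n) ℝ) : frob c (x - y) = frob c x - frob c y := by
  simp only [frob, Matrix.sub_apply, mul_sub, sum_sub_distrib]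

lemma frob_add_row_col (u : Fin m → ℝ) (v : Fin n → ℝ) (π : Matrix (Fin m) (Fin n) ℝ) :
    frob (.of fun i j => u i + v j) π = ∑ i, u i * rowSum π i + ∑ j, v j * colSum π j := by
  simp only [frob, Matrix.of_apply, rowSum, colSum, add_mul, sum_add_distrib, mul_sum]
  rw [sum_comm (f := fun i j => v j * π i j)]

lemma abs_frob_le {K : ℝ} (hc : ∀ i j, |c i j| ≤ K) (π : Matrix (Fin m) (Fin n) ℝ) :
    |frob c π| ≤ K * ∑ i, ∑ j, |π i j| := by
  simp only [mul_sum]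
  refine (abs_sum_le_sum_abs _ _).trans (sum_le_sum fun i _ => ?_)
  refine (abs_sum_le_sum_abs _ _).trans (sum_le_sum fun j _ => ?_)
  rw [abs_mul]
  exact mul_le_mul_of_nonneg_right (hc i j) (abs_nonneg _)

lemma exists_abs_entries_le (c : Matrix (Fin m) (Fin n) ℝ) :
    ∃ K, 0 ≤ K ∧ ∀ i j, |c i j| ≤ K := by
  obtain ⟨K, hK⟩ := Finite.exists_le fun ij : Fin m × Fin n => |c ij.1 ij.2|
  exact ⟨max K 0, le_max_right _ _, fun i j => (hK (i, j)).trans (le_max_left _ _)⟩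

lemma bddBelow_frob_Gamma (c : Matrix (Fin m) (Fin n) ℝ) (p : Fin m → ℝ) (q : Fin n → ℝ) :
    BddBelow (Set.range fun π : Gamma p q => frob c π.1) := by
  obtain ⟨K, -, hK⟩ := exists_abs_entries_le c
  refine ⟨-(K * ∑ i, p i), ?_⟩
  rintro _ ⟨⟨π, hπ⟩, rfl⟩
  have hmass : ∑ i, ∑ j, |π i j| = ∑ i, p i := by
    simp only [abs_of_nonneg (hπ.1 _ _), ← hπ.2.1, rowSum]
  exact hmass ▸ neg_le_of_abs_le (abs_frob_le hK π)

lemma OTval_le_frob (c : Matrix (Fin m) (Fin n) ℝ) (hπ : π ∈ Gamma p q) :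
    OTval c p q ≤ frob c π :=
  ciInf_le (bddBelow_frob_Gamma c p q) ⟨π, hπ⟩

end Plans

section Rounding

variable {m n : ℕ} {p : Fin m → ℝ} {q : Fin n → ℝ} {π : Matrix (Fin m) (Fin n) ℝ}

/-- First step of the rounding procedure: scale down the rows of `π` whose sum exceeds `p`. The
column step is this one applied to the transpose. -/
def shrinkRows (p : Fin m → ℝ) (π : Matrix (Fin m) (Fin n) ℝ) : Matrix (Fin m) (Fin n) ℝ :=
  fun i j => min 1 (p i / rowSum π i) * π i j

/-- The subplan `π''` of `π` produced by the row and column scalings of the rounding procedure. Its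
marginals are at most `p` and `q`. -/
def shrinkPlan (p : Fin m → ℝ) (q : Fin n → ℝ) (π : Matrix (Fin m) (Fin n) ℝ) :
    Matrix (Fin m) (Fin n) ℝ :=
  (shrinkRows q (shrinkRows p π).transpose).transpose

lemma shrinkRows_nonneg (hp : ∀ i, 0 ≤ p i) (hπ : ∀ i j, 0 ≤ π i j) (i : Fin m) (j : Fin n) :
    0 ≤ shrinkRows p π i j :=
  mul_nonneg (le_min zero_le_one (div_nonneg (hp i) (sum_nonneg fun j _ => hπ i j))) (hπ i j)

lemma shrinkRows_le (p : Fin m → ℝ) (hπ : ∀ i j, 0 ≤ π i j) (i : Fin m) (j : Fin n) :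
    shrinkRows p π i j ≤ π i j :=
  mul_le_of_le_one_left (hπ i j) (min_le_left _ _)

lemma rowSum_shrinkRows (hp : ∀ i, 0 ≤ p i) (hπ : ∀ i j, 0 ≤ π i j) (i : Fin m) :
    rowSum (shrinkRows p π) i = min (rowSum π i) (p i) := by
  have hrow : 0 ≤ rowSum π i := sum_nonneg fun j _ => hπ i j
  calc rowSum (shrinkRows p π) i = min 1 (p i / rowSum π i) * rowSum π i := (mul_sum ..).symm
    _ = min (rowSum π i) (p i / rowSum π i * rowSum π i) := by
      rw [min_mul_of_nonneg _ _ hrow, one_mul]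
    _ = min (rowSum π i) (p i) := by
      rcases hrow.eq_or_lt with h | h
      · simp [← h, hp i]
      · rw [div_mul_cancel₀ _ h.ne']

lemma shrinkPlan_nonneg (hp : ∀ i, 0 ≤ p i) (hq : ∀ j, 0 ≤ q j) (hπ : ∀ i j, 0 ≤ π i j)
    (i : Fin m) (j : Fin n) : 0 ≤ shrinkPlan p q π i j :=
  shrinkRows_nonneg hq (fun j i => shrinkRows_nonneg hp hπ i j) j i

lemma shrinkPlan_le_shrinkRows (q : Fin n → ℝ) (hp : ∀ i, 0 ≤ p i) (hπ : ∀ i j, 0 ≤ π i j)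
    (i : Fin m) (j : Fin n) : shrinkPlan p q π i j ≤ shrinkRows p π i j :=
  shrinkRows_le q (fun j i => shrinkRows_nonneg hp hπ i j) j i

lemma shrinkPlan_le (q : Fin n → ℝ) (hp : ∀ i, 0 ≤ p i) (hπ : ∀ i j, 0 ≤ π i j)
    (i : Fin m) (j : Fin n) : shrinkPlan p q π i j ≤ π i j :=
  (shrinkPlan_le_shrinkRows q hp hπ i j).trans (shrinkRows_le p hπ i j)

lemma colSum_shrinkPlan (hp : ∀ i, 0 ≤ p i) (hq : ∀ j, 0 ≤ q j) (hπ : ∀ i j, 0 ≤ π i j)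
    (j : Fin n) : colSum (shrinkPlan p q π) j = min (colSum (shrinkRows p π) j) (q j) :=
  rowSum_shrinkRows hq (fun j i => shrinkRows_nonneg hp hπ i j) j

lemma rowSum_shrinkPlan_le (q : Fin n → ℝ) (hp : ∀ i, 0 ≤ p i) (hπ : ∀ i j, 0 ≤ π i j)
    (i : Fin m) : rowSum (shrinkPlan p q π) i ≤ p i :=
  calc rowSum (shrinkPlan p q π) i ≤ rowSum (shrinkRows p π) i :=
        sum_le_sum fun j _ => shrinkPlan_le_shrinkRows q hp hπ i j
    _ = min (rowSum π i) (p i) := rowSum_shrinkRows hp hπ i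
    _ ≤ p i := min_le_right _ _

lemma colSum_shrinkPlan_le (hp : ∀ i, 0 ≤ p i) (hq : ∀ j, 0 ≤ q j) (hπ : ∀ i j, 0 ≤ π i j)
    (j : Fin n) : colSum (shrinkPlan p q π) j ≤ q j :=
  (colSum_shrinkPlan hp hq hπ j).trans_le (min_le_right _ _)

lemma sum_rowSum_sub_shrinkPlan_le (hp : ∀ i, 0 ≤ p i) (hq : ∀ j, 0 ≤ q j)
    (hπ : ∀ i j, 0 ≤ π i j) :
    ∑ i, rowSum π i - ∑ i, rowSum (shrinkPlan p q π) i ≤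
      ∑ i, (rowSum π i - min (rowSum π i) (p i)) + l1vec (colSum π - q) := by
  have hrows : ∑ i, rowSum π i - ∑ i, rowSum (shrinkRows p π) i =
      ∑ i, (rowSum π i - min (rowSum π i) (p i)) := by
    simp only [rowSum_shrinkRows hp hπ, sum_sub_distrib]
  have hcols : ∑ j, colSum (shrinkRows p π) j - ∑ j, colSum (shrinkPlan p q π) j ≤
      l1vec (colSum π - q) := by
    rw [← sum_sub_distrib]
    refine sum_le_sum fun j _ => ?_
    have hle : colSum (shrinkRows p π) j ≤ colSum π j :=
      sum_le_sum fun i _ => shrinkRows_le p hπ i j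
    rw [colSum_shrinkPlan hp hq hπ j, Pi.sub_apply, sub_le_iff_le_add, ← sub_le_iff_le_add']
    refine le_min ?_ ?_
    · linarith [abs_nonneg (colSum π j - q j)]
    · linarith [le_abs_self (colSum π j - q j)]
  rw [← sum_rowSum_eq_sum_colSum, ← sum_rowSum_eq_sum_colSum] at hcols
  linarith

lemma mul_sum_div_sum {ι : Type*} [Fintype ι] {u : ι → ℝ} (hu : ∀ i, 0 ≤ u i) (i : ι) :
    u i * (∑ k, u k) / ∑ k, u k = u i := by
  refine mul_div_cancel_of_imp fun h => ?_
  exact (sum_eq_zero_iff_of_nonneg fun k _ => hu k).1 h i (mem_univ i)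

/-- Last step of the rounding procedure: add to `σ` the rank-one matrix which restores the
marginals `p` and `q`. When `σ` has marginals `p` and `q` already, the quotient is `0 / 0 = 0`. -/
def fillPlan (p : Fin m → ℝ) (q : Fin n → ℝ) (σ : Matrix (Fin m) (Fin n) ℝ) :
    Matrix (Fin m) (Fin n) ℝ :=
  fun i j => σ i j + (p i - rowSum σ i) * (q j - colSum σ j) / l1vec (p - rowSum σ)

lemma roundPlan_eq_fillPlan_shrinkPlan (p : Fin m → ℝ) (q : Fin n → ℝ)
    (π : Matrix (Fin m) (Fin n) ℝ) : roundPlan p q π = fillPlan p q (shrinkPlan p q π) := by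
  have hshrink : shrinkPlan p q π = fun i j =>
      shrinkRows p π i j * min 1 (q j / colSum (shrinkRows p π) j) := by
    ext i j
    exact mul_comm _ _
  rw [hshrink]
  rfl

variable {σ : Matrix (Fin m) (Fin n) ℝ}

lemma le_fillPlan (hrow : ∀ i, rowSum σ i ≤ p i) (hcol : ∀ j, colSum σ j ≤ q j) (i : Fin m)
    (j : Fin n) : σ i j ≤ fillPlan p q σ i j :=
  le_add_of_nonneg_right <|
    div_nonneg (mul_nonneg (sub_nonneg.2 (hrow i)) (sub_nonneg.2 (hcol j)))
      (sum_nonneg fun _ _ => abs_nonneg _)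

lemma fillPlan_mem_Gamma (hσ : ∀ i j, 0 ≤ σ i j) (hrow : ∀ i, rowSum σ i ≤ p i)
    (hcol : ∀ j, colSum σ j ≤ q j) (hpq : ∑ i, p i = ∑ j, q j) : fillPlan p q σ ∈ Gamma p q := by
  have hu : ∀ i, 0 ≤ p i - rowSum σ i := fun i => sub_nonneg.2 (hrow i)
  have hv : ∀ j, 0 ≤ q j - colSum σ j := fun j => sub_nonneg.2 (hcol j)
  have hl1 : l1vec (p - rowSum σ) = ∑ i, (p i - rowSum σ i) :=
    sum_congr rfl fun i _ => abs_of_nonneg (hu i)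
  have hdeficit : ∑ i, (p i - rowSum σ i) = ∑ j, (q j - colSum σ j) := by
    rw [sum_sub_distrib, sum_sub_distrib, hpq, sum_rowSum_eq_sum_colSum]
  refine ⟨fun i j => (hσ i j).trans (le_fillPlan hrow hcol i j), funext fun i => ?_,
    funext fun j => ?_⟩
  · calc rowSum (fillPlan p q σ) i
        = rowSum σ i + (p i - rowSum σ i) * (∑ j, (q j - colSum σ j)) / l1vec (p - rowSum σ) := by
          simp only [rowSum, fillPlan, sum_add_distrib, mul_sum, sum_div]
      _ = p i := by rw [hl1, ← hdeficit, mul_sum_div_sum hu, add_sub_cancel]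
  · calc colSum (fillPlan p q σ) j
        = colSum σ j + (∑ i, (p i - rowSum σ i)) * (q j - colSum σ j) / l1vec (p - rowSum σ) := by
          simp only [colSum, fillPlan, sum_add_distrib, sum_mul, sum_div]
      _ = q j := by rw [hl1, hdeficit, mul_comm, mul_sum_div_sum hv, add_sub_cancel]

lemma roundPlan_mem_Gamma (hpq : (Gamma p q).Nonempty) (hπ : ∀ i j, 0 ≤ π i j) :
    roundPlan p q π ∈ Gamma p q := by
  obtain ⟨ρ, hρ⟩ := hpq
  have hp := row_nonneg_of_mem_Gamma hρ
  have hq := col_nonneg_of_mem_Gamma hρ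
  rw [roundPlan_eq_fillPlan_shrinkPlan]
  exact fillPlan_mem_Gamma (shrinkPlan_nonneg hp hq hπ) (rowSum_shrinkPlan_le q hp hπ)
    (colSum_shrinkPlan_le hp hq hπ) (sum_eq_sum_of_mem_Gamma hρ)

lemma sum_abs_roundPlan_sub_le (hpq : (Gamma p q).Nonempty) (hπ : ∀ i j, 0 ≤ π i j) :
    ∑ i, ∑ j, |roundPlan p q π i j - π i j| ≤
      l1vec (rowSum π - p) + 2 * l1vec (colSum π - q) := by
  have hround := roundPlan_mem_Gamma hpq hπ
  obtain ⟨ρ, hρ⟩ := hpq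
  have hp := row_nonneg_of_mem_Gamma hρ
  have hq := col_nonneg_of_mem_Gamma hρ
  set σ := shrinkPlan p q π
  have hσround : ∀ i j, σ i j ≤ roundPlan p q π i j := fun i j => by
    rw [roundPlan_eq_fillPlan_shrinkPlan]
    exact le_fillPlan (rowSum_shrinkPlan_le q hp hπ) (colSum_shrinkPlan_le hp hq hπ) i j
  have hthrough_σ : ∀ i j, |roundPlan p q π i j - π i j| ≤
      (roundPlan p q π i j - σ i j) + (π i j - σ i j) := fun i j => by
    rw [abs_le]
    constructor <;> linarith [hσround i j, shrinkPlan_le q hp hπ i j]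
  have hl1 : l1vec (rowSum π - p) =
      ∑ i, (p i - rowSum π i) + 2 * ∑ i, (rowSum π i - min (rowSum π i) (p i)) := by
    rw [mul_sum, ← sum_add_distrib]
    refine sum_congr rfl fun i _ => ?_
    rw [Pi.sub_apply, ← max_sub_min_eq_abs']
    linarith [min_add_max (rowSum π i) (p i)]
  calc ∑ i, ∑ j, |roundPlan p q π i j - π i j|
      ≤ ∑ i, ∑ j, ((roundPlan p q π i j - σ i j) + (π i j - σ i j)) :=
        sum_le_sum fun i _ => sum_le_sum fun j _ => hthrough_σ i j
    _ = (∑ i, rowSum (roundPlan p q π) i - ∑ i, rowSum σ i) +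
          (∑ i, rowSum π i - ∑ i, rowSum σ i) := by
        simp only [rowSum, sum_add_distrib, sum_sub_distrib]
    _ ≤ l1vec (rowSum π - p) + 2 * l1vec (colSum π - q) := by
        rw [hround.2.1, hl1, sum_sub_distrib]
        linarith [sum_rowSum_sub_shrinkPlan_le hp hq hπ]

end Rounding

section OTContinuity

variable {m n : ℕ} {c : Matrix (Fin m) (Fin n) ℝ} {p p' : Fin m → ℝ} {q q' : Fin n → ℝ}

lemma OTval_le_add_l1vec {K : ℝ} (hK : 0 ≤ K) (hc : ∀ i j, |c i j| ≤ K)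
    (hpq : (Gamma p q).Nonempty) (hpq' : (Gamma p' q').Nonempty) :
    OTval c p' q' ≤ OTval c p q + K * (l1vec (p - p') + 2 * l1vec (q - q')) := by
  have := hpq.to_subtype
  rw [← sub_le_iff_le_add]
  refine le_ciInf fun ⟨π, hπ⟩ => ?_
  have hround : frob c (roundPlan p' q' π) - frob c π ≤
      K * (l1vec (p - p') + 2 * l1vec (q - q')) :=
    calc frob c (roundPlan p' q' π) - frob c π
        ≤ K * ∑ i, ∑ j, |roundPlan p' q' π i j - π i j| :=
          frob_sub c _ _ ▸ (le_abs_self _).trans (abs_frob_le hc _)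
      _ ≤ K * (l1vec (p - p') + 2 * l1vec (q - q')) := by
          have := sum_abs_roundPlan_sub_le hpq' hπ.1
          rw [hπ.2.1, hπ.2.2] at this
          exact mul_le_mul_of_nonneg_left this hK
  linarith [OTval_le_frob c (roundPlan_mem_Gamma hpq' hπ.1)]

lemma tendsto_OTval {ι : Type*} {l : Filter ι} {P : ι → Fin m → ℝ} {Q : ι → Fin n → ℝ}
    (c : Matrix (Fin m) (Fin n) ℝ) (hP : Tendsto P l (𝓝 p)) (hQ : Tendsto Q l (𝓝 q))
    (hpq : (Gamma p q).Nonempty) (hPQ : ∀ᶠ t in l, (Gamma (P t) (Q t)).Nonempty) :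
    Tendsto (fun t => OTval c (P t) (Q t)) l (𝓝 (OTval c p q)) := by
  obtain ⟨K, hK, hc⟩ := exists_abs_entries_le c
  have hmodulus : Tendsto (fun t => K * (l1vec (P t - p) + 2 * l1vec (Q t - q))) l (𝓝 0) := by
    have hP' := (continuous_l1vec.tendsto _).comp (hP.sub_const p)
    have hQ' := (continuous_l1vec.tendsto _).comp (hQ.sub_const q)
    simpa [l1vec] using (hP'.add (hQ'.const_mul 2)).const_mul K
  refine tendsto_iff_dist_tendsto_zero.2 (squeeze_zero' (.of_forall fun _ => dist_nonneg) ?_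
    hmodulus)
  filter_upwards [hPQ] with t ht
  have hle := OTval_le_add_l1vec hK hc ht hpq
  have hge := OTval_le_add_l1vec hK hc hpq ht
  rw [l1vec_sub_comm p, l1vec_sub_comm q] at hge
  exact abs_sub_le_iff.2 ⟨by linarith, by linarith⟩

end OTContinuity

section KullbackLeibler

variable {m n : ℕ} {x w ρ : Matrix (Fin m) (Fin n) ℝ}

lemma mul_log_div_sub_add_nonneg {x w : ℝ} (hx : 0 ≤ x) (hw : 0 ≤ w) (hxw : w = 0 → x = 0) :
    0 ≤ x * Real.log (x / w) - x + w := by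
  rcases hw.eq_or_lt' with h | h
  · simp [h, hxw h]
  · calc 0 ≤ w * InformationTheory.klFun (x / w) :=
          mul_nonneg hw (InformationTheory.klFun_nonneg (div_nonneg hx hw))
      _ = x * Real.log (x / w) - x + w := by
          rw [InformationTheory.klFun_apply]
          field_simp
          ring

lemma KLmat_nonneg (hx : ∀ i j, 0 ≤ x i j) (hw : ∀ i j, 0 ≤ w i j)
    (hxw : ∀ i j, w i j = 0 → x i j = 0) : 0 ≤ KLmat x w :=
  sum_nonneg fun i _ => sum_nonneg fun j _ =>
    mul_log_div_sub_add_nonneg (hx i j) (hw i j) (hxw i j)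

lemma continuous_mul_log_div {r : ℝ} (hr : r ≠ 0) :
    Continuous fun x : ℝ => x * Real.log (x / r) := by
  have hrescale : (fun x : ℝ => x * Real.log (x / r)) =
      fun x => r * (x / r * Real.log (x / r)) := by
    ext x
    field_simp
  rw [hrescale]
  exact continuous_const.mul (Real.continuous_mul_log.comp (continuous_id.div_const r))

lemma continuous_KLmat_left (hρ : ∀ i j, ρ i j ≠ 0) : Continuous fun x => KLmat x ρ := by
  refine continuous_finsetSum _ fun i _ => continuous_finsetSum _ fun j _ => ?_
  have hentry : Continuous fun x : Matrix (Fin m) (Fin n) ℝ => x i j := by fun_prop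
  exact (((continuous_mul_log_div (hρ i j)).comp hentry).sub hentry).add continuous_const

lemma mul_log_div_sub_add_eq_add {x w r : ℝ} (hr : r ≠ 0) (hxw : w = 0 → x = 0) :
    x * Real.log (x / r) - x + r = (w * Real.log (w / r) - w + r) +
      (x * Real.log (x / w) - x + w) + Real.log (w / r) * (x - w) := by
  rcases eq_or_ne x 0 with rfl | hx
  · ring
  · have hw : w ≠ 0 := mt hxw hx
    rw [Real.log_div hx hr, Real.log_div hw hr, Real.log_div hx hw]
    ring

lemma KLmat_eq_add_KLmat_add_frob (hρ : ∀ i j, ρ i j ≠ 0) (hxw : ∀ i j, w i j = 0 → x i j = 0) :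
    KLmat x ρ = KLmat w ρ + KLmat x w + frob (.of fun i j => Real.log (w i j / ρ i j)) (x - w) := by
  simp only [KLmat, frob, Matrix.of_apply, ← sum_add_distrib, Matrix.sub_apply]
  exact sum_congr rfl fun i _ => sum_congr rfl fun j _ =>
    mul_log_div_sub_add_eq_add (hρ i j) (hxw i j)

lemma piRef_pos (i : Fin m) (j : Fin n) : 0 < piRef m n i j := by
  have := i.pos
  have := j.pos
  unfold piRef
  positivity

lemma KLmat_piRef_nonneg (hx : ∀ i j, 0 ≤ x i j) : 0 ≤ KLmat x (piRef m n) :=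
  KLmat_nonneg hx (fun i j => (piRef_pos i j).le) fun i j h => absurd h (piRef_pos i j).ne'

lemma continuous_KLmat_piRef : Continuous fun x => KLmat x (piRef m n) :=
  continuous_KLmat_left fun i j => (piRef_pos i j).ne'

lemma exists_KLmat_piRef_le (B : Fin m → ℝ) :
    ∃ C, ∀ x : Matrix (Fin m) (Fin n) ℝ, (∀ i j, x i j ∈ Set.Icc 0 (B i)) →
      KLmat x (piRef m n) ≤ C := by
  obtain ⟨C, hC⟩ := ((isCompact_setOf_entries_mem_Icc B).image continuous_KLmat_piRef).bddAbove
  exact ⟨C, fun x hx => hC ⟨x, hx, rfl⟩⟩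

end KullbackLeibler

section EntropicValue

variable {m n : ℕ} {π : Matrix (Fin m) (Fin n) ℝ} {β : ℝ} {p : Fin m → ℝ} {q : Fin n → ℝ}

lemma frob_le_eotObj (c : Matrix (Fin m) (Fin n) ℝ) (hβ : 0 ≤ β) (hπ : ∀ i j, 0 ≤ π i j) :
    frob c π ≤ eotObj c β π :=
  le_add_of_nonneg_right (mul_nonneg (inv_nonneg.2 hβ) (KLmat_piRef_nonneg hπ))

lemma OTval_le_eotVal (c : Matrix (Fin m) (Fin n) ℝ) (hβ : 0 ≤ β) (p : Fin m → ℝ)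
    (q : Fin n → ℝ) : OTval c p q ≤ eotVal c β p q :=
  ciInf_mono (bddBelow_frob_Gamma c p q) fun π => frob_le_eotObj c hβ π.2.1

lemma eotVal_le_eotObj (c : Matrix (Fin m) (Fin n) ℝ) (hβ : 0 ≤ β) (hπ : π ∈ Gamma p q) :
    eotVal c β p q ≤ eotObj c β π :=
  ciInf_le ((bddBelow_frob_Gamma c p q).range_mono _ fun π => frob_le_eotObj c hβ π.2.1) ⟨π, hπ⟩

lemma eotVal_le_OTval_add (c : Matrix (Fin m) (Fin n) ℝ) (hβ : 0 ≤ β) {C : ℝ}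
    (hpq : (Gamma p q).Nonempty) (hC : ∀ π ∈ Gamma p q, KLmat π (piRef m n) ≤ C) :
    eotVal c β p q ≤ OTval c p q + β⁻¹ * C := by
  have := hpq.to_subtype
  rw [← sub_le_iff_le_add]
  refine le_ciInf fun ⟨π, hπ⟩ => sub_le_iff_le_add.2 ?_
  exact (eotVal_le_eotObj c hβ hπ).trans
    (add_le_add_right (mul_le_mul_of_nonneg_left (hC π hπ) (inv_nonneg.2 hβ)) _)

lemma tendsto_eotVal {ι : Type*} {l : Filter ι} {β : ι → ℝ} {P : ι → Fin m → ℝ}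
    {Q : ι → Fin n → ℝ} (c : Matrix (Fin m) (Fin n) ℝ) (hβ : Tendsto β l atTop)
    (hP : Tendsto P l (𝓝 p)) (hQ : Tendsto Q l (𝓝 q)) (hpq : (Gamma p q).Nonempty)
    (hPQ : ∀ᶠ t in l, (Gamma (P t) (Q t)).Nonempty) :
    Tendsto (fun t => eotVal c (β t) (P t) (Q t)) l (𝓝 (OTval c p q)) := by
  obtain ⟨B, hB⟩ := hP.isBoundedUnder_le
  obtain ⟨C, hC⟩ := exists_KLmat_piRef_le (n := n) B
  have hOT := tendsto_OTval c hP hQ hpq hPQ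
  have hupper : Tendsto (fun t => OTval c (P t) (Q t) + (β t)⁻¹ * C) l (𝓝 (OTval c p q)) := by
    simpa using hOT.add (hβ.inv_tendsto_atTop.mul_const C)
  refine tendsto_of_tendsto_of_tendsto_of_le_of_le' hOT hupper ?_ ?_
  · filter_upwards [hβ.eventually_ge_atTop 0] with t ht
    exact OTval_le_eotVal c ht (P t) (Q t)
  · filter_upwards [hβ.eventually_ge_atTop 0, hPQ, eventually_map.1 hB] with t ht hne hle
    exact eotVal_le_OTval_add c ht hne fun π hπ => hC π (mem_Icc_of_mem_Gamma hπ hle)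

end EntropicValue

section Scaling

variable {m n : ℕ} {c x w : Matrix (Fin m) (Fin n) ℝ} {β : ℝ}

lemma nonneg_of_mem_scalingSet (hw : w ∈ scalingSet c β) (i : Fin m) (j : Fin n) : 0 ≤ w i j := by
  obtain ⟨a, b, ha, hb, rfl⟩ := hw
  exact mul_nonneg (mul_nonneg (ha i) (Real.exp_pos _).le) (hb j)

lemma eq_zero_of_mem_scalingSet_of_eq_zero (hw : w ∈ scalingSet c β)
    (hx : x ∈ Gamma (rowSum w) (colSum w)) (i : Fin m) (j : Fin n) (hij : w i j = 0) :
    x i j = 0 := by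
  refine le_antisymm ?_ (hx.1 i j)
  obtain ⟨a, b, -, -, hw⟩ := hw
  have hab : a i = 0 ∨ b j = 0 := by simpa [hw] using hij
  rcases hab with hi | hj
  · have hrow : rowSum w i = 0 := by simp [hw, rowSum, hi]
    exact (le_rowSum hx.1 i j).trans_eq ((congrFun hx.2.1 i).trans hrow)
  · have hcol : colSum w j = 0 := by simp [hw, colSum, hj]
    exact (le_colSum hx.1 i j).trans_eq ((congrFun hx.2.2 j).trans hcol)

lemma frob_log_sub_of_mem_scalingSet (hw : w ∈ scalingSet c β)
    (hx : x ∈ Gamma (rowSum w) (colSum w)) :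
    frob (.of fun i j => Real.log (w i j / piRef m n i j)) (x - w) = -(β * frob c (x - w)) := by
  have hzero := eq_zero_of_mem_scalingSet_of_eq_zero hw hx
  obtain ⟨a, b, -, -, hw⟩ := hw
  let u : Fin m → ℝ := fun i => Real.log (a i)
  let v : Fin n → ℝ := fun j => Real.log (b j) - Real.log (1 / (m * n))
  have hentry : ∀ i j, Real.log (w i j / piRef m n i j) * (x - w) i j =
      (u i + v j) * (x - w) i j - β * (c i j * (x - w) i j) := fun i j => by
    rcases eq_or_ne (w i j) 0 with h | h
    · simp [h, hzero i j h]
    · have hlog : Real.log (w i j / piRef m n i j) = u i + v j - β * c i j := by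
        rw [Real.log_div h (piRef_pos i j).ne']
        simp only [hw, ne_eq, mul_eq_zero, not_or] at h ⊢
        rw [Real.log_mul (mul_ne_zero h.1.1 h.1.2) h.2, Real.log_mul h.1.1 h.1.2, Real.log_exp]
        simp only [u, v, piRef]
        ring
      rw [hlog]
      ring
  have hpotential : frob (.of fun i j => u i + v j) (x - w) = 0 := by
    rw [frob_sub, frob_add_row_col, frob_add_row_col, hx.2.1, hx.2.2, sub_self]
  calc frob (.of fun i j => Real.log (w i j / piRef m n i j)) (x - w)
      = frob (.of fun i j => u i + v j) (x - w) - β * frob c (x - w) := by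
        simp only [frob, Matrix.of_apply, hentry, sum_sub_distrib, mul_sum]
    _ = -(β * frob c (x - w)) := by rw [hpotential, zero_sub]

lemma eotObj_eq_add_KLmat_of_mem_scalingSet (hβ : β ≠ 0) (hw : w ∈ scalingSet c β)
    (hx : x ∈ Gamma (rowSum w) (colSum w)) :
    eotObj c β x = eotObj c β w + β⁻¹ * KLmat x w := by
  have hKL := KLmat_eq_add_KLmat_add_frob (ρ := piRef m n) (fun i j => (piRef_pos i j).ne')
    (eq_zero_of_mem_scalingSet_of_eq_zero hw hx)
  rw [frob_log_sub_of_mem_scalingSet hw hx, frob_sub] at hKL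
  rw [eotObj, eotObj, hKL]
  field_simp
  ring

lemma eotVal_eq_eotObj_of_mem_scalingSet (hβ : 0 < β) (hw : w ∈ scalingSet c β) :
    eotVal c β (rowSum w) (colSum w) = eotObj c β w := by
  have hself : w ∈ Gamma (rowSum w) (colSum w) := ⟨nonneg_of_mem_scalingSet hw, rfl, rfl⟩
  have : Nonempty (Gamma (rowSum w) (colSum w)) := ⟨⟨w, hself⟩⟩
  refine (eotVal_le_eotObj c hβ.le hself).antisymm (le_ciInf fun ⟨x, hx⟩ => ?_)
  rw [eotObj_eq_add_KLmat_of_mem_scalingSet hβ.ne' hw hx]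
  exact le_add_of_nonneg_right <| mul_nonneg (inv_pos.2 hβ).le <|
    KLmat_nonneg hx.1 (nonneg_of_mem_scalingSet hw) (eq_zero_of_mem_scalingSet_of_eq_zero hw hx)

lemma frob_eq_of_tendsto_of_mem_scalingSet {ι : Type*} {l : Filter ι} [l.NeBot] {β : ι → ℝ}
    {π : ι → Matrix (Fin m) (Fin n) ℝ} {πinf : Matrix (Fin m) (Fin n) ℝ} {v : ℝ}
    (hβ : Tendsto β l atTop) (hπ : ∀ t, π t ∈ scalingSet c (β t)) (hlim : Tendsto π l (𝓝 πinf))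
    (hval : Tendsto (fun t => eotVal c (β t) (rowSum (π t)) (colSum (π t))) l (𝓝 v)) :
    frob c πinf = v := by
  have hfrob := ((continuous_frob c).tendsto πinf).comp hlim
  have hKL := hβ.inv_tendsto_atTop.mul ((continuous_KLmat_piRef.tendsto πinf).comp hlim)
  have hobj : Tendsto (fun t => eotObj c (β t) (π t)) l (𝓝 (frob c πinf)) := by
    simpa [eotObj] using hfrob.add hKL
  refine tendsto_nhds_unique hobj (hval.congr' ?_)
  filter_upwards [hβ.eventually_gt_atTop 0] with t ht
  exact eotVal_eq_eotObj_of_mem_scalingSet ht (hπ t)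

end Scaling

theorem eot_stability_general {m n : ℕ} (c : Matrix (Fin m) (Fin n) ℝ) (β : ℕ → ℝ)
    (hβ : Tendsto β atTop atTop) (π : ℕ → Matrix (Fin m) (Fin n) ℝ)
    (hπ : ∀ t, π t ∈ scalingSet c (β t)) (p : Fin m → ℝ) (q : Fin n → ℝ)
    (hpt : Tendsto (fun t => rowSum (π t)) atTop (𝓝 p))
    (hqt : Tendsto (fun t => colSum (π t)) atTop (𝓝 q)) :
    Tendsto (fun t => eotVal c (β t) (rowSum (π t)) (colSum (π t))) atTop
        (𝓝 (OTval c p q)) ∧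
      ∃ φ : ℕ → ℕ, StrictMono φ ∧ ∃ πinf ∈ Gamma p q,
        (∀ π' ∈ Gamma p q, frob c πinf ≤ frob c π') ∧
          Tendsto (fun k => π (φ k)) atTop (𝓝 πinf) := by
  have hnonneg : ∀ t i j, 0 ≤ π t i j := fun t => nonneg_of_mem_scalingSet (hπ t)
  obtain ⟨φ, hφ, πinf, hmem, hlim⟩ := exists_subseq_tendsto_mem_Gamma hnonneg hpt hqt
  have hval := tendsto_eotVal c hβ hpt hqt ⟨πinf, hmem⟩
    (.of_forall fun t => ⟨π t, hnonneg t, rfl, rfl⟩)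
  have hopt : frob c πinf = OTval c p q :=
    frob_eq_of_tendsto_of_mem_scalingSet (hβ.comp hφ.tendsto_atTop) (fun k => hπ (φ k)) hlim
      (hval.comp hφ.tendsto_atTop)
  exact ⟨hval, φ, hφ, πinf, hmem, fun π' hπ' => hopt.trans_le (OTval_le_frob c hπ'), hlim⟩

/-- Lemma 6, second part: stability of EOT.
If `π_t = diag(a_t) e^{-β_t c} diag(b_t)` have mass 1, `β_t → ∞`, and the marginals
`p_t = π_t𝟙 → p`, `q_t = π_tᵀ𝟙 → q`, then `EOT_{β_t}(p_t,q_t) → OT(p,q)` and, up to a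
subsequence, `π_t` converges to an optimal transport plan. -/
theorem eot_stability
    {m n : ℕ} (c : Matrix (Fin m) (Fin n) ℝ)
    (β : ℕ → ℝ) (hβpos : ∀ t, 0 < β t) (hβtop : Tendsto β atTop atTop)
    (a : ℕ → Fin m → ℝ) (b : ℕ → Fin n → ℝ)
    (ha : ∀ t i, 0 < a t i) (hb : ∀ t j, 0 < b t j)
    (π : ℕ → Matrix (Fin m) (Fin n) ℝ)
    (hπ : ∀ t, π t = fun i j => a t i * Real.exp (-(β t * c i j)) * b t j)
    (hmass : ∀ t, ∑ i, ∑ j, π t i j = 1)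
    (p : Fin m → ℝ) (q : Fin n → ℝ) (hp : p ∈ simplexPos m) (hq : q ∈ simplexPos n)
    (hpt : Tendsto (fun t => rowSum (π t)) atTop (𝓝 p))
    (hqt : Tendsto (fun t => colSum (π t)) atTop (𝓝 q)) :
    Tendsto (fun t => eotVal c (β t) (rowSum (π t)) (colSum (π t))) atTop
        (𝓝 (OTval c p q)) ∧
      ∃ φ : ℕ → ℕ, StrictMono φ ∧ ∃ πinf ∈ Gamma p q,
        (∀ π' ∈ Gamma p q, frob c πinf ≤ frob c π') ∧
          Tendsto (fun k => π (φ k)) atTop (𝓝 πinf) :=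
  eot_stability_general c β hβtop π
    (fun t => ⟨a t, b t, fun i => (ha t i).le, fun j => (hb t j).le, hπ t⟩) p q hpt hqt

end
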